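/- Let N be a positive squarefree integer and let P be a non-torsion integral point of E_N(ℚ). Suppose that for some integer n ≥ 1 the point nP is integral and lies on the non-identity component of E_N(ℝ), i.e. the x-coordinate of nP is negative. Then n = 1. -/

import Mathlib

/-- The congruent number curve `E_N : y² = x³ - N²x` over `ℚ`. -/
def congruentCurve (N : ℕ) : WeierstrassCurve.Affine ℚ :=
  { a₁ := 0, a₂ := 0, a₃ := 0, a₄ := -(N : ℚ) ^ 2, a₆ := 0 }

lemma cc_eq {N : ℕ} {x y : ℚ} (h : (congruentCurve N).Nonsingular x y) :
    y ^ 2 = x ^ 3 - (N : ℚ) ^ 2 * x := by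
  have := (WeierstrassCurve.Affine.equation_iff _ _).mp h.1
  simp [congruentCurve] at this
  linarith

lemma cc_dbl {N : ℕ} {s t x y : ℚ} (h : (congruentCurve N).Nonsingular s t)
    (h' : (congruentCurve N).Nonsingular x y)
    (he : WeierstrassCurve.Affine.Point.some _ _ h + WeierstrassCurve.Affine.Point.some _ _ h =
      WeierstrassCurve.Affine.Point.some _ _ h') :
    t ≠ 0 ∧ 4 * t ^ 2 * x = (s ^ 2 + (N : ℚ) ^ 2) ^ 2 := by
  have e := cc_eq h
  have ht : t ≠ 0 := by
    rintro rfl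
    rw [WeierstrassCurve.Affine.Point.add_self_of_Y_eq
      (by simp [WeierstrassCurve.Affine.negY, congruentCurve])] at he
    exact WeierstrassCurve.Affine.Point.some_ne_zero _ he.symm
  refine ⟨ht, ?_⟩
  have hy : t ≠ (congruentCurve N).negY s t := by
    simp only [WeierstrassCurve.Affine.negY, congruentCurve]
    intro h0
    apply ht
    linarith
  rw [WeierstrassCurve.Affine.Point.add_self_of_Y_ne hy] at he
  have hx := (WeierstrassCurve.Affine.Point.some.inj he).1
  rw [WeierstrassCurve.Affine.slope_of_Y_ne rfl hy] at hx
  simp only [WeierstrassCurve.Affine.addX, WeierstrassCurve.Affine.negY, congruentCurve] at hx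
  rw [← hx]
  have h2 : t - (-t - 0 * s - 0) = 2 * t := by ring
  rw [h2]
  field_simp
  linear_combination (-32 * s) * e

lemma cc_add {N : ℕ} {x1 y1 x2 y2 x y : ℚ} (h1 : (congruentCurve N).Nonsingular x1 y1)
    (h2 : (congruentCurve N).Nonsingular x2 y2)
    (h' : (congruentCurve N).Nonsingular x y) (hne : x1 ≠ x2)
    (he : WeierstrassCurve.Affine.Point.some _ _ h1 + WeierstrassCurve.Affine.Point.some _ _ h2 =
      WeierstrassCurve.Affine.Point.some _ _ h') :
    x * (x1 - x2) ^ 2 = (y1 - y2) ^ 2 - (x1 + x2) * (x1 - x2) ^ 2 := by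
  rw [WeierstrassCurve.Affine.Point.add_of_X_ne hne] at he
  have hx := (WeierstrassCurve.Affine.Point.some.inj he).1
  rw [WeierstrassCurve.Affine.slope_of_X_ne hne] at hx
  simp only [WeierstrassCurve.Affine.addX, congruentCurve] at hx
  rw [← hx]
  have := sub_ne_zero.mpr hne
  field_simp
  ring

/-- Integer core. -/
lemma cc_core (N u w C d s : ℤ) (hN : 0 < N) (hw : 0 < w) (huw : IsCoprime u w)
    (huN : IsCoprime u N) (hu : N * w < u) (hC : 0 < C) (hC2 : C ≤ 2 * N ^ 2)
    (hd : 0 < d)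
    (heq : (u ^ 2 + N ^ 2 * w ^ 2) ^ 4 * d
      - 2 * s * (u ^ 2 + N ^ 2 * w ^ 2) ^ 2 * (4 * (u * w * (u ^ 2 - N ^ 2 * w ^ 2)))
      + C ^ 2 * (4 * (u * w * (u ^ 2 - N ^ 2 * w ^ 2))) ^ 2 = 0) :
    u ^ 2 + N ^ 2 * w ^ 2 = 2 * C ∧ u * w * (u ^ 2 - N ^ 2 * w ^ 2) ≤ d := by
  obtain ⟨M, hM⟩ : ∃ M, M = u ^ 2 + N ^ 2 * w ^ 2 := ⟨_, rfl⟩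
  obtain ⟨D, hD⟩ : ∃ D, D = u * w * (u ^ 2 - N ^ 2 * w ^ 2) := ⟨_, rfl⟩
  rw [← hM, ← hD] at heq ⊢
  have huM : IsCoprime u M := by
    have h1 : IsCoprime u (N ^ 2 * w ^ 2) := (huN.pow_right).mul_right huw.pow_right
    have := (IsCoprime.add_mul_left_right_iff (z := u)).mpr h1
    have e : M = N ^ 2 * w ^ 2 + u * u := by rw [hM]; ring
    rw [e]; exact this
  have hwM : IsCoprime w M := by
    have h1 : IsCoprime w (u ^ 2) := huw.symm.pow_right
    have := (IsCoprime.add_mul_left_right_iff (z := N ^ 2 * w)).mpr h1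
    have e : M = u ^ 2 + w * (N ^ 2 * w) := by rw [hM]; ring
    rw [e]; exact this
  have hM4 : ¬ (4 : ℤ) ∣ M := by
    intro h4
    have hu2 : ¬ (2 : ℤ) ∣ u := by
      intro h2
      have : IsCoprime (2 : ℤ) 2 :=
        huM.of_isCoprime_of_dvd_left h2 |>.of_isCoprime_of_dvd_right (by omega)
      have := Int.isCoprime_iff_gcd_eq_one.mp this
      norm_num at this
    have h3 : u % 4 = 1 ∨ u % 4 = 3 := by omega
    have h5 : (N * w) % 4 = 0 ∨ (N * w) % 4 = 1 ∨ (N * w) % 4 = 2 ∨ (N * w) % 4 = 3 := by omega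
    have h6 : M = u ^ 2 + (N * w) ^ 2 := by rw [hM]; ring
    have h7 : M % 4 = 0 := by omega
    rw [h6] at h7
    rcases h3 with h3 | h3 <;> rcases h5 with h5 | h5 | h5 | h5 <;>
      simp [pow_two, Int.add_emod, Int.mul_emod, h3, h5] at h7
  have hMdvd : M ∣ 4 * C * D := by
    have : M ^ 2 ∣ (4 * C * D) ^ 2 :=
      ⟨-(M ^ 2 * d) + 2 * s * (4 * D), by linear_combination heq⟩
    exact (Int.pow_dvd_pow_iff two_ne_zero).mp this
  have hM8 : M ∣ 8 * C := by
    have h1 : M ∣ u * (w * (4 * C * (u ^ 2 - N ^ 2 * w ^ 2))) := by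
      convert hMdvd using 1; rw [hD]; ring
    have h2 := hwM.symm.dvd_of_dvd_mul_left (huM.symm.dvd_of_dvd_mul_left h1)
    have h3 : M ∣ u ^ 2 * (8 * C) := by
      have : u ^ 2 * (8 * C) = 4 * C * (u ^ 2 - N ^ 2 * w ^ 2) + M * (4 * C) := by
        rw [hM]; ring
      rw [this]
      exact dvd_add h2 (dvd_mul_right _ _)
    exact (huM.symm.pow_right).dvd_of_dvd_mul_left h3
  have odd_cop : ∀ z : ℤ, z % 2 = 1 → IsCoprime z 2 := fun z hz =>
    ⟨1, -(z / 2), by omega⟩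
  have hM2 : M ∣ 2 * C := by
    rcases Int.emod_two_eq_zero_or_one M with h0 | h1
    · obtain ⟨m, rfl⟩ : ∃ m, M = 2 * m := ⟨M / 2, by omega⟩
      have hm : IsCoprime m (2 ^ 2) := (odd_cop m (by omega)).pow_right
      have : m ∣ 2 ^ 2 * C := by
        obtain ⟨k, hk⟩ := hM8
        exact ⟨k, by linarith⟩
      exact mul_dvd_mul_left 2 (hm.dvd_of_dvd_mul_left this)
    · have hm : IsCoprime M (2 ^ 3) := (odd_cop M h1).pow_right
      have : M ∣ 2 ^ 3 * C := by simpa using hM8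
      exact (hm.dvd_of_dvd_mul_left this).mul_left 2
  have hNw : N ≤ N * w := by nlinarith
  have hMbig : 2 * N ^ 2 < M := by
    rw [hM]; nlinarith
  have hMC : M = 2 * C := by
    obtain ⟨k, hk⟩ := hM2
    have hk1 : 0 < k := by
      by_contra hcon
      nlinarith
    have hk2 : k < 2 := by
      by_contra hcon
      nlinarith
    have : k = 1 := by omega
    subst this
    linarith
  refine ⟨hMC, ?_⟩
  have hCo : IsCoprime C 2 := odd_cop C (by omega)
  have hCM : C ∣ M := ⟨2, by linarith⟩
  have hCu : IsCoprime C u := (huM.of_isCoprime_of_dvd_right hCM).symm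
  have hCw : IsCoprime C w := (hwM.of_isCoprime_of_dvd_right hCM).symm
  have hCe : IsCoprime C (u ^ 2 - N ^ 2 * w ^ 2) := by
    have h1 : IsCoprime C (2 * u ^ 2) := hCo.mul_right hCu.pow_right
    have := (IsCoprime.add_mul_left_right_iff (z := -2)).mpr h1
    have e : u ^ 2 - N ^ 2 * w ^ 2 = 2 * u ^ 2 + C * -2 := by linear_combination hM - hMC
    rw [e]; exact this
  have hCD : IsCoprime C D := by
    rw [hD]; exact (hCu.mul_right hCw).mul_right hCe
  have hDd : D ∣ C ^ 2 * d := by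
    refine ⟨2 * s - D, ?_⟩
    have h16 : (16 * C ^ 2) * (C ^ 2 * d) = (16 * C ^ 2) * (D * (2 * s - D)) := by
      rw [hMC] at heq
      linear_combination heq
    exact mul_left_cancel₀ (by positivity) h16
  exact Int.le_of_dvd hd ((hCD.symm.pow_right).dvd_of_dvd_mul_left hDd)

set_option maxHeartbeats 2000000 in
lemma cc_num (N : ℕ) (hN : 0 < N) (hsq : Squarefree N) (a x : ℤ) (b y X Z r t s q : ℚ)
    (e1 : b ^ 2 = (a : ℚ) ^ 3 - (N : ℚ) ^ 2 * a) (e2 : y ^ 2 = (x : ℚ) ^ 3 - (N : ℚ) ^ 2 * x)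
    (hax : (x : ℚ) ≠ a) (hx : x < 0)
    (hX : X * ((x : ℚ) - a) ^ 2 = (y - b) ^ 2 - (x + a) * ((x : ℚ) - a) ^ 2)
    (hZ : Z * ((x : ℚ) - a) ^ 2 = (y + b) ^ 2 - (x + a) * ((x : ℚ) - a) ^ 2)
    (hZN : (N : ℚ) < Z)
    (ht : t ≠ 0) (e3 : t ^ 2 = r ^ 3 - (N : ℚ) ^ 2 * r)
    (hXr : 4 * t ^ 2 * X = (r ^ 2 + (N : ℚ) ^ 2) ^ 2)
    (hq : q ≠ 0) (e4 : q ^ 2 = s ^ 3 - (N : ℚ) ^ 2 * s)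
    (hrs : 4 * q ^ 2 * r = (s ^ 2 + (N : ℚ) ^ 2) ^ 2) : False := by
  have hNq : (0 : ℚ) < N := by exact_mod_cast hN
  have hN1 : (1 : ℚ) ≤ N := by exact_mod_cast hN
  have hd : 0 < ((x : ℚ) - a) ^ 2 := by
    have := sub_ne_zero.mpr hax
    positivity
  have hxq : (x : ℚ) < 0 := by exact_mod_cast hx
  -- squares
  have hr1 : r = ((s ^ 2 + (N : ℚ) ^ 2) / (2 * q)) ^ 2 := by
    field_simp; linear_combination hrs
  have hr2 : r + N = ((s ^ 2 + 2 * N * s - (N : ℚ) ^ 2) / (2 * q)) ^ 2 := by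
    field_simp; linear_combination hrs + 4 * N * e4
  have hr3 : r - N = ((s ^ 2 - 2 * N * s - (N : ℚ) ^ 2) / (2 * q)) ^ 2 := by
    field_simp; linear_combination hrs - 4 * N * e4
  have hrN : (N : ℚ) < r := by
    have h0 : 0 ≤ r - N := by rw [hr3]; positivity
    rcases h0.lt_or_eq with h | h
    · linarith
    · exfalso
      have : r = N := by linarith
      rw [this] at e3
      apply ht
      have : t ^ 2 = 0 := by rw [e3]; ring
      exact pow_eq_zero_iff two_ne_zero |>.mp this
  have hXpos : 0 < X := by
    have h1 : 0 < 4 * t ^ 2 * X := by rw [hXr]; positivity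
    have h2 : 0 < 4 * t ^ 2 := by positivity
    exact (mul_pos_iff_of_pos_left h2).mp h1
  -- a ≤ 0
  have ha0 : (a : ℚ) ≤ 0 := by
    by_contra hcon
    push Not at hcon
    have h1 : (a * x) * (X * ((x : ℚ) - a) ^ 2) = (b * x - y * a) ^ 2 := by
      rw [hX]
      linear_combination (x : ℚ) * (a - x) * e1 - (a : ℚ) * (a - x) * e2
    have h2 : (a : ℚ) * x < 0 := mul_neg_of_pos_of_neg hcon hxq
    have h3 : 0 < X * ((x : ℚ) - a) ^ 2 := by positivity
    nlinarith [sq_nonneg (b * x - y * a)]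
  have bnd : ∀ c z : ℚ, z ^ 2 = c ^ 3 - (N : ℚ) ^ 2 * c → c ≤ 0 → -(N : ℚ) ≤ c := by
    intro c z hz hc
    by_contra hcon
    push Not at hcon
    have : 0 < c ^ 2 - (N : ℚ) ^ 2 := by nlinarith
    nlinarith [sq_nonneg z]
  have haN := bnd _ _ e1 ha0
  have hxN := bnd _ _ e2 hxq.le
  have hC0 : 0 ≤ (a : ℚ) * x := mul_nonneg_of_nonpos_of_nonpos ha0 hxq.le
  have hC2 : (a : ℚ) * x ≤ (N : ℚ) ^ 2 := by
    have := mul_le_mul (neg_le.mp haN) (neg_le.mp hxN) (by linarith) hNq.le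
    linarith [neg_mul_neg (a : ℚ) x, pow_two (N : ℚ)]
  -- sum and product
  have hsum : (X + Z) * ((x : ℚ) - a) ^ 2 = 2 * ((a * x - (N : ℚ) ^ 2) * (a + x)) := by
    linear_combination hX + hZ + 2 * e1 + 2 * e2
  have hprod : X * Z * ((x : ℚ) - a) ^ 2 = (a * x + (N : ℚ) ^ 2) ^ 2 := by
    have h1 : (X * ((x : ℚ) - a) ^ 2) * (Z * ((x : ℚ) - a) ^ 2)
        = (y ^ 2 + b ^ 2 - (x + a) * ((x : ℚ) - a) ^ 2) ^ 2 - 4 * y ^ 2 * b ^ 2 := by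
      rw [hX, hZ]; ring
    rw [e1, e2] at h1
    apply mul_right_cancel₀ hd.ne'
    linear_combination h1
  -- lowest terms
  have hw0 : (0 : ℚ) < r.den := by exact_mod_cast r.den_pos
  have hrw : r * r.den = r.num := Rat.mul_den_eq_num r
  have hrsq : IsSquare r := ⟨_, by rw [← pow_two]; exact hr1⟩
  obtain ⟨hnsq, hdsq⟩ := Rat.isSquare_iff.mp hrsq
  have husq : IsSquare (r.num + N * r.den : ℤ) := by
    have : IsSquare (((r.num + N * r.den : ℤ)) : ℚ) := by
      have h1 : (((r.num + N * r.den : ℤ)) : ℚ) = (r + N) * r.den := by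
        push_cast; rw [← hrw]; ring
      rw [h1]
      apply IsSquare.mul
      · exact ⟨_, by rw [← pow_two]; exact hr2⟩
      · obtain ⟨c, hc⟩ := hdsq
        exact ⟨c, by rw [hc]; push_cast; ring⟩
    exact Rat.isSquare_intCast_iff.mp this
  have huw : IsCoprime r.num (r.den : ℤ) := by
    rw [Int.isCoprime_iff_gcd_eq_one]; exact r.reduced
  have huN : IsCoprime r.num (N : ℤ) := by
    rw [Int.isCoprime_iff_gcd_eq_one]
    by_contra hg
    obtain ⟨p, hp, hpg⟩ := Nat.exists_prime_and_dvd hg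
    have hpi : Prime (p : ℤ) := Nat.prime_iff_prime_int.mp hp
    have hpu : (p : ℤ) ∣ r.num := (Int.natCast_dvd_natCast.mpr hpg).trans (Int.gcd_dvd_left ..)
    have hpN : (p : ℤ) ∣ N := (Int.natCast_dvd_natCast.mpr hpg).trans (Int.gcd_dvd_right ..)
    have sqd : ∀ z : ℤ, IsSquare z → (p : ℤ) ∣ z → (p : ℤ) * p ∣ z := by
      rintro z ⟨c, rfl⟩ hz
      have : (p : ℤ) ∣ c := (hpi.dvd_or_dvd hz).elim id id
      exact mul_dvd_mul this this
    have h1 := sqd _ hnsq hpu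
    have h2 := sqd _ husq (dvd_add hpu (hpN.mul_right _))
    have h3 : (p : ℤ) * p ∣ N * r.den := (dvd_add_right h1).mp h2
    have hpw : ¬ (p : ℤ) ∣ r.den := by
      intro h
      exact hpi.not_isUnit (huw.isUnit_of_dvd' hpu h)
    have hcop : IsCoprime ((p : ℤ) * p) (r.den : ℤ) := by
      have := (Prime.coprime_iff_not_dvd hpi).mpr hpw
      exact this.mul_left this
    have h4 : (p : ℤ) * p ∣ N := hcop.dvd_of_dvd_mul_right h3
    have h5 : p * p ∣ N := by exact_mod_cast h4
    exact hp.one_lt.ne' (Nat.isUnit_iff.mp (hsq p h5))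
  have hrden : r = (r.num : ℚ) / r.den := (Rat.num_div_den r).symm
  obtain ⟨u, hu⟩ : ∃ u, u = r.num := ⟨_, rfl⟩
  obtain ⟨w, hw⟩ : ∃ w : ℤ, w = r.den := ⟨_, rfl⟩
  have hwq : (r.den : ℚ) = (w : ℚ) := by rw [hw]; simp
  rw [← hu] at hrden huN huw
  rw [← hw] at huw
  rw [hwq] at hrden hw0
  have key : X * (4 * (u * w * (u ^ 2 - (N : ℚ) ^ 2 * w ^ 2)))
      = ((u : ℚ) ^ 2 + (N : ℚ) ^ 2 * w ^ 2) ^ 2 := by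
    rw [e3, hrden] at hXr
    field_simp at hXr
    linear_combination hXr
  have hNwu : (N : ℚ) * w < u := by
    rw [hrden, lt_div_iff₀ hw0] at hrN; exact hrN
  have core := cc_core N u w (a * x + N ^ 2) ((x - a) ^ 2) ((a * x - N ^ 2) * (a + x))
    (by exact_mod_cast hN) (by exact_mod_cast hw0) huw huN (by exact_mod_cast hNwu)
    (by
      have : (0 : ℚ) < a * x + (N : ℚ) ^ 2 := by positivity
      exact_mod_cast this)
    (by
      have : (a : ℚ) * x + (N : ℚ) ^ 2 ≤ 2 * (N : ℚ) ^ 2 := by linarith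
      exact_mod_cast this)
    (by exact_mod_cast hd)
    (by
      have hquad : X ^ 2 * ((x : ℚ) - a) ^ 2 - 2 * ((a * x - (N : ℚ) ^ 2) * (a + x)) * X
          + (a * x + (N : ℚ) ^ 2) ^ 2 = 0 := by
        linear_combination X * hsum - hprod
      have : ((u : ℚ) ^ 2 + (N : ℚ) ^ 2 * w ^ 2) ^ 4 * ((x : ℚ) - a) ^ 2
        - 2 * ((a * x - (N : ℚ) ^ 2) * (a + x)) * ((u : ℚ) ^ 2 + (N : ℚ) ^ 2 * w ^ 2) ^ 2
          * (4 * (u * w * (u ^ 2 - (N : ℚ) ^ 2 * w ^ 2)))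
        + (a * x + (N : ℚ) ^ 2) ^ 2 * (4 * (u * w * (u ^ 2 - (N : ℚ) ^ 2 * w ^ 2))) ^ 2 = 0 := by
        have h4 : ((u : ℚ) ^ 2 + (N : ℚ) ^ 2 * w ^ 2) ^ 4 =
          (((u : ℚ) ^ 2 + (N : ℚ) ^ 2 * w ^ 2) ^ 2) ^ 2 := by ring
        rw [h4, ← key]
        linear_combination (4 * (u * w * ((u : ℚ) ^ 2 - (N : ℚ) ^ 2 * w ^ 2))) ^ 2 * hquad
      exact_mod_cast this)
  obtain ⟨c1, c2⟩ := core
  have c1' : (u : ℚ) ^ 2 + (N : ℚ) ^ 2 * w ^ 2 = 2 * (a * x + (N : ℚ) ^ 2) := by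
    exact_mod_cast c1
  have c2' : (u : ℚ) * w * (u ^ 2 - (N : ℚ) ^ 2 * w ^ 2) ≤ ((x : ℚ) - a) ^ 2 := by
    exact_mod_cast c2
  have hfin : Z * ((x : ℚ) - a) ^ 2 = u * w * (u ^ 2 - (N : ℚ) ^ 2 * w ^ 2) := by
    rw [c1'] at key
    apply mul_left_cancel₀ hXpos.ne'
    linear_combination hprod - key / 4
  nlinarith

theorem stmt2 (N : ℕ) (hN : 0 < N) (hsq : Squarefree N)
    (a b : ℤ) (h : (congruentCurve N).Nonsingular (a : ℚ) (b : ℚ))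
    (hPtors : ∀ m : ℤ, 1 ≤ m →
      m • (WeierstrassCurve.Affine.Point.some _ _ h) ≠ 0)
    (n : ℤ) (hn : 1 ≤ n)
    (x y : ℚ) (h' : (congruentCurve N).Nonsingular x y)
    (hnP : n • (WeierstrassCurve.Affine.Point.some _ _ h) =
      WeierstrassCurve.Affine.Point.some _ _ h')
    (hxint : x.den = 1) (hxneg : x < 0) :
    n = 1 := by
  by_contra hn1
  obtain ⟨P, hP⟩ : ∃ P, P = WeierstrassCurve.Affine.Point.some _ _ h := ⟨_, rfl⟩
  rw [← hP] at hPtors hnP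
  have ex : ∀ m : ℤ, 1 ≤ m → ∃ (u v : ℚ) (hh : (congruentCurve N).Nonsingular u v),
      m • P = WeierstrassCurve.Affine.Point.some _ _ hh := by
    intro m hm
    have := hPtors m hm
    rcases hc : m • P with _ | ⟨u, v, hh⟩
    · exact absurd hc this
    · exact ⟨u, v, hh, rfl⟩
  have hdbl : ∀ (m : ℤ) (s t u v : ℚ) (h1 : (congruentCurve N).Nonsingular s t)
      (h2 : (congruentCurve N).Nonsingular u v),
      m • P = WeierstrassCurve.Affine.Point.some _ _ h1 →
      (2 * m) • P = WeierstrassCurve.Affine.Point.some _ _ h2 →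
      t ≠ 0 ∧ 4 * t ^ 2 * u = (s ^ 2 + (N : ℚ) ^ 2) ^ 2 := by
    intro m s t u v h1 h2 e1 e2
    apply cc_dbl h1 h2
    rw [← e1, ← e2, two_mul, add_zsmul]
  have hpos2 : ∀ (m : ℤ), 1 ≤ m → ∀ (u v : ℚ) (h2 : (congruentCurve N).Nonsingular u v),
      (2 * m) • P = WeierstrassCurve.Affine.Point.some _ _ h2 → (N : ℚ) < u := by
    intro m hm u v h2 e2
    obtain ⟨s, t, h1, e1⟩ := ex m hm
    obtain ⟨ht, hu⟩ := hdbl m _ _ _ _ h1 h2 e1 e2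
    obtain ⟨s', t', h3, e3⟩ := ex (2 * (2 * m)) (by omega)
    obtain ⟨hv, -⟩ := hdbl (2 * m) _ _ _ _ h2 h3 e2 e3
    have es := cc_eq h1
    have eu := cc_eq h2
    have hr3 : u - N = ((s ^ 2 - 2 * N * s - (N : ℚ) ^ 2) / (2 * t)) ^ 2 := by
      field_simp; linear_combination hu - 4 * N * es
    have h0 : 0 ≤ u - N := by rw [hr3]; positivity
    rcases h0.lt_or_eq with h | h
    · linarith
    · exfalso
      have : u = N := by linarith
      rw [this] at eu
      apply hv
      have : v ^ 2 = 0 := by rw [eu]; ring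
      exact pow_eq_zero_iff two_ne_zero |>.mp this
  have hNq : (0 : ℚ) < N := by exact_mod_cast hN
  obtain ⟨z, rfl⟩ : ∃ z : ℤ, x = z := ⟨x.num, by
    conv_lhs => rw [← Rat.num_div_den x]
    rw [hxint]; simp⟩
  have hz : z < 0 := by exact_mod_cast hxneg
  have hodd : n % 2 = 1 := by
    by_contra hcon
    obtain ⟨m, rfl⟩ : ∃ m, n = 2 * m := ⟨n / 2, by omega⟩
    have := hpos2 m (by omega) _ _ h' hnP
    linarith
  -- the negated point
  have hneg : (congruentCurve N).Nonsingular (a : ℚ) (-(b : ℚ)) := by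
    have := (WeierstrassCurve.Affine.nonsingular_neg _ _).mpr h
    simpa [WeierstrassCurve.Affine.negY, congruentCurve] using this
  have hnegP : -P = WeierstrassCurve.Affine.Point.some _ _ hneg := by
    rw [hP, WeierstrassCurve.Affine.Point.neg_some]
    simp [WeierstrassCurve.Affine.negY, congruentCurve]
  obtain ⟨u1, v1, hp1, ep1⟩ := ex (n + 1) (by omega)
  obtain ⟨u2, v2, hp2, ep2⟩ := ex (n - 1) (by omega)
  have ea := cc_eq h
  have ez := cc_eq h'
  have hne : (z : ℚ) ≠ a := by
    intro heq
    have hyb : y = b ∨ y = -b := by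
      apply sq_eq_sq_iff_eq_or_eq_neg.mp
      rw [ea, ez, heq]
    rcases hyb with hyb | hyb
    · apply hPtors (n - 1) (by omega)
      rw [sub_zsmul, one_zsmul, hnP, hP, ← sub_eq_add_neg, sub_eq_zero]
      simp [heq, hyb]
    · apply hPtors (n + 1) (by omega)
      rw [add_zsmul, one_zsmul, hnP, ← sub_neg_eq_add, hnegP, sub_eq_zero]
      simp [heq, hyb]
  have hA := cc_add h' h hp1 hne (by rw [← hnP, ← hP, ← ep1, add_zsmul, one_zsmul])
  have hB := cc_add h' hneg hp2 hne (by
    rw [← hnP, ← hnegP, ← ep2, sub_zsmul, one_zsmul])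
  rcases (by omega : n % 4 = 1 ∨ n % 4 = 3) with h4 | h4
  · obtain ⟨m, hm⟩ : ∃ m, n - 1 = 2 * (2 * m) := ⟨(n - 1) / 4, by omega⟩
    obtain ⟨k, hk⟩ : ∃ k, n + 1 = 2 * k := ⟨(n + 1) / 2, by omega⟩
    obtain ⟨s, q, hs, es⟩ := ex m (by omega)
    obtain ⟨r, t, hr, er⟩ := ex (2 * m) (by omega)
    obtain ⟨hq, hq2⟩ := hdbl m _ _ _ _ hs hr es er
    obtain ⟨ht, ht2⟩ := hdbl (2 * m) _ _ _ _ hr hp2 er (by rw [← hm]; exact ep2)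
    have hZ := hpos2 k (by omega) _ _ hp1 (by rw [← hk]; exact ep1)
    exact cc_num N hN hsq a z (-b) y u2 u1 r t s q (by rw [← ea]; ring) ez hne hz
      hB (by rw [hA]; ring) hZ ht (cc_eq hr) ht2 hq (cc_eq hs) hq2
  · obtain ⟨m, hm⟩ : ∃ m, n + 1 = 2 * (2 * m) := ⟨(n + 1) / 4, by omega⟩
    obtain ⟨k, hk⟩ : ∃ k, n - 1 = 2 * k := ⟨(n - 1) / 2, by omega⟩
    obtain ⟨s, q, hs, es⟩ := ex m (by omega)
    obtain ⟨r, t, hr, er⟩ := ex (2 * m) (by omega)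
    obtain ⟨hq, hq2⟩ := hdbl m _ _ _ _ hs hr es er
    obtain ⟨ht, ht2⟩ := hdbl (2 * m) _ _ _ _ hr hp1 er (by rw [← hm]; exact ep1)
    have hZ := hpos2 k (by omega) _ _ hp2 (by rw [← hk]; exact ep2)
    exact cc_num N hN hsq a z b y u1 u2 r t s q ea ez hne hz
      hA (by rw [hB]; ring) hZ ht (cc_eq hr) ht2 hq (cc_eq hs) hq2
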